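/- arXiv:2106.06934 — 3 statements merged into one kernel-verified Lean document; each statement's English description precedes it below -/
import Mathlib

section
/- Let a > 0 and c ≥ 0 be real numbers. Then the function g(P) = (P − c) / ln(1 + a·P) is strictly increasing on the interval (0, ∞). (Consequently, the per-iteration energy consumption ΔE_n(P) of a mobile device, which has this form with c = α·f³ up to positive affine rescaling, increases monotonically in the transmit power P.) -/
/-- For real `a > 0` and `c ≥ 0`, the function `g(P) = (P - c) / ln(1 + a·P)`
is strictly increasing on `(0, ∞)`. -/
theorem stmt_0 (a c : ℝ) (ha : 0 < a) (hc : 0 ≤ c) :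
    StrictMonoOn (fun P : ℝ => (P - c) / Real.log (1 + a * P)) (Set.Ioi (0 : ℝ)) := by
  intro x hx y hy hxy
  simp only [Set.mem_Ioi] at hx hy
  have hax : 0 < a * x := mul_pos ha hx
  have hay : 0 < a * y := mul_pos ha hy
  have hlt : a * x < a * y := mul_lt_mul_of_pos_left hxy ha
  have Lx : 0 < Real.log (1 + a * x) := Real.log_pos (by linarith)
  have Ly : 0 < Real.log (1 + a * y) := Real.log_pos (by linarith)
  have Lxy : Real.log (1 + a * x) < Real.log (1 + a * y) :=
    Real.log_lt_log (by linarith) (by linarith)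
  have h1 : (0 : ℝ) < 1 - x / y := by
    rw [sub_pos, div_lt_one hy]; exact hxy
  have key := strictConcaveOn_log_Ioi.2 (x := 1) (y := 1 + a * y)
    (by simp) (by simp only [Set.mem_Ioi]; linarith) (by linarith)
    h1 (div_pos hx hy) (by ring)
  have e : (1 - x / y) • (1 : ℝ) + (x / y) • (1 + a * y) = 1 + a * x := by
    simp only [smul_eq_mul]; field_simp; ring
  rw [e] at key
  simp only [smul_eq_mul, Real.log_one, mul_zero, zero_add] at key
  rw [div_mul_eq_mul_div, div_lt_iff₀ hy] at key
  show (x - c) / Real.log (1 + a * x) < (y - c) / Real.log (1 + a * y)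
  rw [div_lt_div_iff₀ Lx Ly]
  have := mul_le_mul_of_nonneg_left Lxy.le hc
  linarith
end

section
/- Let W, h, σ², M, τ > 0 be real numbers, and for P > 0 set R(P) = W·log₂(1 + P·h/σ²). For every P > 0 satisfying the delay-feasibility condition M/R(P) ≤ τ, the communication energy satisfies P·M/R(P) ≥ E_th := (τ·σ²/h)·(2^{M/(W·τ)} − 1), with equality if and only if P = (σ²/h)·(2^{M/(W·τ)} − 1). In particular, if a device's available energy budget is below the threshold E_th, it cannot upload its M bits within one iteration of duration τ. -/
/-- For `W, h, σ², M, τ > 0`, rate `R(P) = W·log₂(1 + P·h/σ²)`, and any `P > 0`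
satisfying the delay-feasibility condition `M/R(P) ≤ τ`, the communication energy
`P·M/R(P)` is at least the threshold energy `E_th = (τ·σ²/h)·(2^(M/(W·τ)) − 1)`,
with equality iff `P = (σ²/h)·(2^(M/(W·τ)) − 1)`. -/
theorem stmt_3 (W h σ2 M τ : ℝ) (hW : 0 < W) (hh : 0 < h) (hσ2 : 0 < σ2)
    (hM : 0 < M) (hτ : 0 < τ) (P : ℝ) (hP : 0 < P)
    (hfeas : M / (W * Real.logb 2 (1 + P * h / σ2)) ≤ τ) :
    (τ * σ2 / h) * ((2 : ℝ) ^ (M / (W * τ)) - 1) ≤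
        P * M / (W * Real.logb 2 (1 + P * h / σ2)) ∧
      (P * M / (W * Real.logb 2 (1 + P * h / σ2)) =
          (τ * σ2 / h) * ((2 : ℝ) ^ (M / (W * τ)) - 1) ↔
        P = (σ2 / h) * ((2 : ℝ) ^ (M / (W * τ)) - 1)) := by
  have hx : 0 < P * h / σ2 := by positivity
  have hPx : P = σ2 / h * (P * h / σ2) := by field_simp
  generalize P * h / σ2 = x at *
  have hL : 0 < Real.logb 2 (1 + x) := Real.logb_pos (by norm_num) (by linarith)
  have hpow : (2 : ℝ) ^ Real.logb 2 (1 + x) = 1 + x :=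
    Real.rpow_logb (by norm_num) (by norm_num) (by linarith)
  generalize Real.logb 2 (1 + x) = L at *
  obtain ⟨t, ht⟩ : ∃ t, t = M / (W * L) / τ := ⟨_, rfl⟩
  have ht0 : 0 < t := by rw [ht]; positivity
  have ht1 : t ≤ 1 := by rw [ht, div_le_one hτ]; exact hfeas
  have ha : M / (W * τ) = L * t := by rw [ht]; field_simp
  have hE : P * M / (W * L) = (τ * σ2 / h) * (t * x) := by
    have h1 : P * M / (W * L) = P * τ * t := by rw [ht]; field_simp
    rw [h1]
    nth_rewrite 1 [hPx]
    ring
  have hc : 0 < τ * σ2 / h := by positivity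
  have hd : 0 < σ2 / h := by positivity
  rw [hE, ha, Real.rpow_mul (by norm_num), hpow]
  rcases ht1.eq_or_lt with h1 | h1
  · subst h1
    simp only [Real.rpow_one, one_mul, add_sub_cancel_left]
    exact ⟨le_rfl, fun _ => hPx, fun _ => trivial⟩
  · have hB : (1 + x) ^ t < 1 + t * x :=
      rpow_one_add_lt_one_add_mul_self (by linarith) hx.ne' ht0 h1
    have h2 : (τ * σ2 / h) * ((1 + x) ^ t - 1) < (τ * σ2 / h) * (t * x) :=
      mul_lt_mul_of_pos_left (by linarith) hc
    have h3 : σ2 / h * ((1 + x) ^ t - 1) < σ2 / h * x :=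
      mul_lt_mul_of_pos_left (by nlinarith) hd
    refine ⟨h2.le, fun h => absurd h h2.ne', fun h => ?_⟩
    linarith
end

section
/- Let W, h, σ², M, τ, α, f > 0 be real numbers, set P_min = (σ²/h)·(2^{M/(W·τ)} − 1), let P_max ≥ P_min, and for P > 0 define R(P) = W·log₂(1 + P·h/σ²) and ΔE(P) = (τ − M/R(P))·α·f³ + P·M/R(P). Let E_th = τ·P_min = (τσ²/h)(2^{M/(Wτ)} − 1) and ΔE_max = ΔE(P_max). Then ΔE(P_min) = E_th, and for every target energy value y with E_th ≤ y ≤ ΔE_max there exists a unique P ∈ [P_min, P_max] such that ΔE(P) = y. -/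
theorem aux_log (x y : ℝ) (hx : 0 < x) (hxy : x < y) :
    x * Real.log (1 + y) < y * Real.log (1 + x) := by
  have hy : 0 < y := hx.trans hxy
  have g1 : (1 : ℝ) ∈ Set.Ioi (0 : ℝ) := by simp
  have g2 : 1 + y ∈ Set.Ioi (0 : ℝ) := Set.mem_Ioi.2 (by linarith)
  have g3 : (1 : ℝ) ≠ 1 + y := by intro hc; linarith
  have g4 : 0 < 1 - x / y := by rw [sub_pos, div_lt_one hy]; exact hxy
  have g5 : 0 < x / y := by positivity
  have h1 := strictConcaveOn_log_Ioi.2 g1 g2 g3 g4 g5 (by ring)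
  simp only [smul_eq_mul, Real.log_one, mul_zero, zero_add] at h1
  have e : (1 - x / y) * 1 + x / y * (1 + y) = 1 + x := by field_simp; ring
  rw [e, div_mul_eq_mul_div, div_lt_iff₀ hy] at h1
  linarith

/-- For `W, h, σ², M, τ, α, f > 0`, with `P_min = (σ²/h)·(2^(M/(W·τ)) − 1)`,
`P_max ≥ P_min`, rate `R(P) = W·log₂(1 + P·h/σ²)` and energy
`ΔE(P) = (τ − M/R(P))·α·f³ + P·M/R(P)`, we have `ΔE(P_min) = E_th = τ·P_min`,
and for every target `y` with `E_th ≤ y ≤ ΔE(P_max)` there is a unique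
`P ∈ [P_min, P_max]` with `ΔE(P) = y`. -/
theorem stmt_6 (W h σ2 M τ α f : ℝ) (hW : 0 < W) (hh : 0 < h) (hσ2 : 0 < σ2)
    (hM : 0 < M) (hτ : 0 < τ) (hα : 0 < α) (hf : 0 < f)
    (Pmin : ℝ) (hPmin : Pmin = (σ2 / h) * ((2 : ℝ) ^ (M / (W * τ)) - 1))
    (Pmax : ℝ) (hPmax : Pmin ≤ Pmax)
    (ΔE : ℝ → ℝ)
    (hΔE : ∀ P : ℝ, ΔE P = (τ - M / (W * Real.logb 2 (1 + P * h / σ2))) * (α * f ^ 3) +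
      P * M / (W * Real.logb 2 (1 + P * h / σ2)))
    (Eth : ℝ) (hEth : Eth = τ * Pmin) :
    ΔE Pmin = Eth ∧
      ∀ y : ℝ, Eth ≤ y → y ≤ ΔE Pmax →
        ∃! P : ℝ, P ∈ Set.Icc Pmin Pmax ∧ ΔE P = y := by
  have h2 : 0 < Real.log 2 := Real.log_pos (by norm_num)
  have hmp : 0 < Pmin := by
    rw [hPmin]
    have : (1 : ℝ) < 2 ^ (M / (W * τ)) :=
      Real.one_lt_rpow (by norm_num) (by positivity)
    exact mul_pos (by positivity) (by linarith)
  have hl : ∀ P, 0 < P → 0 < Real.logb 2 (1 + P * h / σ2) := fun P hP =>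
    Real.logb_pos (by norm_num) (by have : 0 < P * h / σ2 := by positivity
                                    linarith)
  have hmin : ΔE Pmin = Eth := by
    have e : 1 + Pmin * h / σ2 = 2 ^ (M / (W * τ)) := by
      rw [hPmin]; field_simp; ring
    rw [hΔE, e, Real.logb_rpow (by norm_num) (by norm_num), hEth]
    field_simp
    ring
  have hmono : StrictMonoOn ΔE (Set.Icc Pmin Pmax) := by
    intro p hp q hq hpq
    have hp0 : 0 < p := hmp.trans_le hp.1
    have hq0 : 0 < q := hp0.trans hpq
    have a := hl p hp0
    have b := hl q hq0
    have hx : p * h / σ2 < q * h / σ2 := by gcongr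
    have hx0 : 0 < p * h / σ2 := by positivity
    have hab : Real.logb 2 (1 + p * h / σ2) < Real.logb 2 (1 + q * h / σ2) :=
      Real.logb_lt_logb (by norm_num) (by linarith) (by linarith)
    have hc : p * Real.logb 2 (1 + q * h / σ2) < q * Real.logb 2 (1 + p * h / σ2) := by
      have := aux_log _ _ hx0 hx
      have k : 0 < h / σ2 / Real.log 2 := by positivity
      have h3 : (h / σ2) * (p * Real.log (1 + q * h / σ2))
          < (h / σ2) * (q * Real.log (1 + p * h / σ2)) := by
        convert this using 1 <;> ring
      have h4 := lt_of_mul_lt_mul_left h3 (by positivity)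
      simp only [Real.logb, ← mul_div_assoc]
      gcongr
    rw [hΔE, hΔE]
    generalize Real.logb 2 (1 + p * h / σ2) = u at *
    generalize Real.logb 2 (1 + q * h / σ2) = v at *
    have s1 : M / (W * v) < M / (W * u) := by gcongr
    have s2 : p * M / (W * u) < q * M / (W * v) := by
      rw [div_lt_div_iff₀ (by positivity) (by positivity)]
      have := mul_lt_mul_of_pos_left hc (mul_pos hM hW)
      linarith
    have s3 : (τ - M / (W * u)) * (α * f ^ 3) < (τ - M / (W * v)) * (α * f ^ 3) :=
      mul_lt_mul_of_pos_right (by linarith) (by positivity)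
    linarith
  have hcont : ContinuousOn ΔE (Set.Icc Pmin Pmax) := by
    have hl' : ContinuousOn (fun P => W * Real.logb 2 (1 + P * h / σ2)) (Set.Icc Pmin Pmax) := by
      simp only [Real.logb]
      refine continuousOn_const.mul (ContinuousOn.div_const (ContinuousOn.log (by fun_prop) ?_) _)
      intro x hx
      have : 0 < x := hmp.trans_le hx.1
      positivity
    have hne : ∀ P ∈ Set.Icc Pmin Pmax, W * Real.logb 2 (1 + P * h / σ2) ≠ 0 := fun P hP =>
      (mul_pos hW (hl P (hmp.trans_le hP.1))).ne'
    rw [funext hΔE]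
    exact ((continuousOn_const.sub (continuousOn_const.div hl' hne)).mul continuousOn_const).add
      (ContinuousOn.div (by fun_prop) hl' hne)
  refine ⟨hmin, fun y hy1 hy2 => ?_⟩
  obtain ⟨P, hP, hPy⟩ := intermediate_value_Icc hPmax hcont ⟨hmin.trans_le hy1, hy2⟩
  exact ⟨P, ⟨hP, hPy⟩, fun Q hQ => hmono.injOn hQ.1 hP (hQ.2.trans hPy.symm)⟩
end
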